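/- Let S be a set of n points in the plane in general position and let p ∈ S. Then, as integers, cr(S ∖ {p}) = cr(S) − f_S({p}, S) − f_S(S, {p}) + Σ_{q∈S∖{p}} Σ_{r ∈ S, r strictly to the left of the directed line from p to q} (1 − λ_S(q,r)) + (n−1)(n−2)(n−3)/2. -/

import Mathlib

open Finset

/-- The plane. -/
abbrev Plane : Type := ℝ × ℝ

/-- The determinant det(q - p, r - p). -/
def det2 (p q r : Plane) : ℝ :=
  (q.1 - p.1) * (r.2 - p.2) - (q.2 - p.2) * (r.1 - p.1)

/-- `r` is strictly to the left of the directed line from `p` to `q`. -/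
def LeftOf (p q r : Plane) : Prop := 0 < det2 p q r

/-- `r` is strictly to the right of the directed line from `p` to `q`. -/
def RightOf (p q r : Plane) : Prop := det2 p q r < 0

/-- A finite point set is in general position if no three of its points are collinear. -/
def GenPos (S : Finset Plane) : Prop :=
  ∀ p ∈ S, ∀ q ∈ S, ∀ r ∈ S, p ≠ q → p ≠ r → q ≠ r →
    ¬ Collinear ℝ ({p, q, r} : Set Plane)

open Classical in
/-- `lam S p q` is the number of points of `S` strictly to the left of the directed
line from `p` to `q`, with `lam S p p = 0`. -/
noncomputable def lam (S : Finset Plane) (p q : Plane) : ℕ :=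
  if p = q then 0 else (S.filter fun r => LeftOf p q r).card

/-- A finite point set is in convex position if no one of its points lies in the
convex hull of the others. -/
def ConvexPos (P : Finset Plane) : Prop :=
  ∀ x ∈ P, x ∉ convexHull ℝ ((P.erase x : Finset Plane) : Set Plane)

open Classical in
/-- The number of 4-element subsets of `S` in convex position. -/
noncomputable def squareCount (S : Finset Plane) : ℕ :=
  ((S.powersetCard 4).filter fun P => ConvexPos P).card

/-- `fS S P Q = ∑_{p ∈ P} ∑_{q ∈ Q} C(lam S p q, 2)`. -/
noncomputable def fS (S P Q : Finset Plane) : ℕ :=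
  ∑ p ∈ P, ∑ q ∈ Q, Nat.choose (lam S p q) 2

/-!
Put `T = S \ {p}`. Each term of the formula is a sum of contributions of the 3-element subsets
`{a, b, c}` of `T`: a convex quadrilateral at `p`, a point `q ∈ T` with two further points to the
left of `pq` or of `qp`, and a path `p → q → r → s` turning left at `q` and at `r` each involve
exactly three points of `T`. So the formula reduces to an identity for four points. Let `abc` be
counterclockwise and let `k ∈ {1, 2, 3}` be the number of its directed edges with `p` on their left.
Then `{a, b, c}` contributes `k (3 - k) / 2` to each of the two sums `f`, it contributes `k` paths,
and `{p, a, b, c}` is in convex position exactly when `k = 2`. The formula thus follows from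
`k (3 - k) + k = 3 + [k = 2]`, where the constant `3`, summed over the 3-element subsets, becomes
`3 C(n - 1, 3) = (n - 1) (n - 2) (n - 3) / 2`.
-/

section DoubleCounting

variable {α M : Type*} [AddCommMonoid M]

theorem sum_powersetCard_succ_sum [DecidableEq α] (s : Finset α) (k : ℕ)
    (g : α → Finset α → M) :
    ∑ t ∈ s.powersetCard (k + 1), ∑ a ∈ t, g a (t.erase a) =
      ∑ a ∈ s, ∑ t ∈ (s.erase a).powersetCard k, g a t := by
  rw [sum_sigma', sum_sigma']
  refine sum_bij' (fun x _ ↦ ⟨x.2, x.1.erase x.2⟩) (fun x _ ↦ ⟨insert x.1 x.2, x.1⟩)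
    ?_ ?_ ?_ ?_ fun _ _ ↦ rfl
  · rintro ⟨t, a⟩ h
    obtain ⟨⟨hts, htk⟩, hat⟩ : (t ⊆ s ∧ #t = k + 1) ∧ a ∈ t := by simpa using h
    simp [hts hat, erase_subset_erase a hts, card_erase_of_mem hat, htk]
  · rintro ⟨a, t⟩ h
    obtain ⟨has, hts, htk⟩ : a ∈ s ∧ t ⊆ s.erase a ∧ #t = k := by simpa using h
    have hat : a ∉ t := fun hat ↦ notMem_erase a s (hts hat)
    simp [insert_subset_iff, has, hts.trans (erase_subset a s), card_insert_of_notMem hat, htk]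
  · rintro ⟨t, a⟩ h
    have hat : a ∈ t := (mem_sigma.mp h).2
    simp [insert_erase hat]
  · rintro ⟨a, t⟩ h
    have hts : t ⊆ s.erase a := (mem_powersetCard.mp (mem_sigma.mp h).2).1
    have hat : a ∉ t := fun hat ↦ notMem_erase a s (hts hat)
    simp [erase_insert hat]

theorem sum_distinct_triples_eq_sum_powersetCard [DecidableEq α] (s : Finset α)
    (f : α → α → α → M) :
    ∑ a ∈ s, ∑ b ∈ s.erase a, ∑ c ∈ (s.erase a).erase b, f a b c =
      ∑ t ∈ s.powersetCard 3,
        ∑ a ∈ t, ∑ b ∈ t.erase a, ∑ c ∈ (t.erase a).erase b, f a b c := by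
  have one (u : Finset α) (g : α → M) :
      ∑ t ∈ u.powersetCard 1, ∑ c ∈ t, g c = ∑ c ∈ u, g c := by
    simp [powersetCard_one]
  rw [sum_powersetCard_succ_sum s 2 fun a t ↦ ∑ b ∈ t, ∑ c ∈ t.erase b, f a b c]
  refine sum_congr rfl fun a _ ↦ ?_
  rw [sum_powersetCard_succ_sum (s.erase a) 1 fun b t ↦ ∑ c ∈ t, f a b c]
  exact sum_congr rfl fun b _ ↦ (one _ _).symm

theorem sum_triples_eq_sum_powersetCard (s : Finset α) (f : α → α → α → M)
    (h₁₂ : ∀ a b, f a a b = 0) (h₁₃ : ∀ a b, f a b a = 0) (h₂₃ : ∀ a b, f a b b = 0) :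
    ∑ a ∈ s, ∑ b ∈ s, ∑ c ∈ s, f a b c =
      ∑ t ∈ s.powersetCard 3, ∑ a ∈ t, ∑ b ∈ t, ∑ c ∈ t, f a b c := by
  classical
  have sum_eq_distinct (u : Finset α) : ∑ a ∈ u, ∑ b ∈ u, ∑ c ∈ u, f a b c =
      ∑ a ∈ u, ∑ b ∈ u.erase a, ∑ c ∈ (u.erase a).erase b, f a b c := by
    refine sum_congr rfl fun a _ ↦ ?_
    rw [← sum_erase u (sum_eq_zero fun c _ ↦ h₁₂ a c)]
    refine sum_congr rfl fun b _ ↦ ?_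
    rw [sum_erase _ (h₂₃ a b), sum_erase _ (h₁₃ a b)]
  simp only [sum_eq_distinct, sum_distinct_triples_eq_sum_powersetCard s f]

theorem sum_choose_card_filter_eq_sum_powersetCard (s : Finset α) (r : α → α → Prop)
    [DecidableRel r] (hr : ∀ a, ¬ r a a) (k : ℕ) :
    ∑ a ∈ s, (#{b ∈ s | r a b}).choose k =
      ∑ t ∈ s.powersetCard (k + 1), ∑ a ∈ t, (#{b ∈ t | r a b}).choose k := by
  classical
  have choose_eq (u : Finset α) (a : α) : (#{b ∈ u | r a b}).choose k =
      ∑ t ∈ (u.erase a).powersetCard k, if ∀ b ∈ t, r a b then 1 else 0 := by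
    rw [← card_powersetCard, ← card_filter]
    congr 1
    ext t
    simp only [mem_powersetCard, mem_filter, subset_iff, mem_erase]
    grind
  calc ∑ a ∈ s, (#{b ∈ s | r a b}).choose k
      = ∑ a ∈ s, ∑ t ∈ (s.erase a).powersetCard k, if ∀ b ∈ t, r a b then 1 else 0 :=
        sum_congr rfl fun a _ ↦ choose_eq s a
    _ = ∑ t ∈ s.powersetCard (k + 1), ∑ a ∈ t, if ∀ b ∈ t.erase a, r a b then 1 else 0 :=
        (sum_powersetCard_succ_sum s k _).symm
    _ = ∑ t ∈ s.powersetCard (k + 1), ∑ a ∈ t, (#{b ∈ t | r a b}).choose k := by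
        refine sum_congr rfl fun t ht ↦ sum_congr rfl fun a ha ↦ ?_
        have hcard : #(t.erase a) = k := by
          rw [card_erase_of_mem ha, (mem_powersetCard.mp ht).2, Nat.add_sub_cancel]
        rw [choose_eq, ← hcard, powersetCard_self, sum_singleton]

theorem card_filter_powersetCard_succ_insert [DecidableEq α] {s : Finset α} {x : α} (hx : x ∉ s)
    (k : ℕ) (P : Finset α → Prop) [DecidablePred P] :
    #{t ∈ (insert x s).powersetCard (k + 1) | P t} =
      #{t ∈ s.powersetCard (k + 1) | P t} + #{t ∈ s.powersetCard k | P (insert x t)} := by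
  have notMem_of_mem {j : ℕ} {t : Finset α} (ht : t ∈ s.powersetCard j) : x ∉ t :=
    notMem_mono (mem_powersetCard.mp ht).1 hx
  have hdisj : Disjoint (s.powersetCard (k + 1)) ((s.powersetCard k).image (insert x)) := by
    rw [disjoint_right]
    intro u hu hu'
    obtain ⟨t, -, rfl⟩ := mem_image.mp hu
    exact notMem_of_mem hu' (mem_insert_self x t)
  have hinj : Set.InjOn (insert x) (s.powersetCard k : Set (Finset α)) := by
    intro t ht u hu htu
    rw [← erase_insert (notMem_of_mem ht), htu, erase_insert (notMem_of_mem hu)]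
  rw [powersetCard_succ_insert hx, filter_union,
    card_union_of_disjoint (disjoint_filter_filter hdisj), filter_image,
    card_image_of_injOn (hinj.mono (filter_subset _ _))]

end DoubleCounting

section Orientation

variable (p a b c : Plane)

theorem det2_rotate : det2 b c a = det2 a b c := by
  unfold det2
  ring

theorem det2_swap_right : det2 a c b = -det2 a b c := by
  unfold det2
  ring

theorem det2_swap_left : det2 b a c = -det2 a b c := by
  unfold det2
  ring

theorem det2_add_det2_add_det2 : det2 p a b + det2 p b c + det2 p c a = det2 a b c := by
  unfold det2
  ring

theorem leftOf_rotate : LeftOf b c a ↔ LeftOf a b c := by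
  rw [LeftOf, LeftOf, det2_rotate]

theorem not_leftOf_self : ¬ LeftOf a a b := by
  simp [LeftOf, det2]

theorem not_leftOf_left : ¬ LeftOf a b a := by
  simp [LeftOf, det2]

theorem not_leftOf_right : ¬ LeftOf a b b := by
  simp [LeftOf, det2, mul_comm]

variable {p a b c}

theorem leftOf_swap_right (h : det2 a b c ≠ 0) : LeftOf a c b ↔ ¬ LeftOf a b c := by
  rw [LeftOf, LeftOf, det2_swap_right, neg_pos, not_lt, h.le_iff_lt]

theorem leftOf_swap_left (h : det2 a b c ≠ 0) : LeftOf b a c ↔ ¬ LeftOf a b c := by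
  rw [LeftOf, LeftOf, det2_swap_left, neg_pos, not_lt, h.le_iff_lt]

theorem ne_of_det2_ne_zero (h : det2 a b c ≠ 0) : a ≠ b ∧ a ≠ c ∧ b ≠ c := by
  refine ⟨?_, ?_, ?_⟩ <;> rintro rfl <;> exact h (by unfold det2; ring)

theorem collinear_of_det2_eq_zero (h : det2 a b c = 0) : Collinear ℝ {a, b, c} := by
  obtain rfl | hab := eq_or_ne a b
  · rw [Set.insert_eq_of_mem (Set.mem_insert a {c})]
    exact collinear_pair ℝ a c
  have hnorm : (b.1 - a.1) ^ 2 + (b.2 - a.2) ^ 2 ≠ 0 := by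
    contrapose! hab
    ext <;> nlinarith [sq_nonneg (b.1 - a.1), sq_nonneg (b.2 - a.2)]
  unfold det2 at h
  have hc : c = AffineMap.lineMap a b
      (((b.1 - a.1) * (c.1 - a.1) + (b.2 - a.2) * (c.2 - a.2)) /
        ((b.1 - a.1) ^ 2 + (b.2 - a.2) ^ 2)) := by
    rw [AffineMap.lineMap_apply_module']
    ext <;> simp only [Prod.fst_add, Prod.snd_add, Prod.smul_fst, Prod.smul_snd, Prod.fst_sub,
      Prod.snd_sub, smul_eq_mul] <;> field_simp
    · linear_combination -(b.2 - a.2) * h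
    · linear_combination (b.1 - a.1) * h
  have hmem : c ∈ line[ℝ, a, b] := hc ▸ AffineMap.lineMap_mem_affineSpan_pair _ a b
  rw [Set.pair_comm b c, Set.insert_comm]
  exact collinear_insert_of_mem_affineSpan_pair hmem

theorem GenPos.mono {S T : Finset Plane} (hT : GenPos T) (hST : S ⊆ T) : GenPos S :=
  fun p hp q hq r hr ↦ hT p (hST hp) q (hST hq) r (hST hr)

theorem GenPos.det2_ne_zero {S : Finset Plane} (hS : GenPos S) (ha : a ∈ S) (hb : b ∈ S)
    (hc : c ∈ S) (hab : a ≠ b) (hac : a ≠ c) (hbc : b ≠ c) : det2 a b c ≠ 0 :=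
  fun h ↦ hS a ha b hb c hc hab hac hbc (collinear_of_det2_eq_zero h)

end Orientation

section ConvexPosition

theorem mem_convexHull_triple {𝕜 E : Type*} [Field 𝕜] [LinearOrder 𝕜] [IsStrictOrderedRing 𝕜]
    [AddCommGroup E] [Module 𝕜 E] {x y z v : E} :
    v ∈ convexHull 𝕜 {x, y, z} ↔
      ∃ r s t : 𝕜, 0 ≤ r ∧ 0 ≤ s ∧ 0 ≤ t ∧ r + s + t = 1 ∧ r • x + s • y + t • z = v := by
  constructor
  · rw [convexHull_insert (Set.insert_nonempty y {z}), convexHull_pair, mem_convexJoin]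
    rintro ⟨_, rfl, _, ⟨s, t, hs, ht, hst, rfl⟩, ⟨r, q, hr, hq, hrq, rfl⟩⟩
    refine ⟨r, q * s, q * t, hr, mul_nonneg hq hs, mul_nonneg hq ht, ?_, ?_⟩
    · rw [add_assoc, ← mul_add, hst, mul_one, hrq]
    · simp only [smul_add, mul_smul, add_assoc]
  · rintro ⟨r, s, t, hr, hs, ht, hrst, rfl⟩
    refine mem_convexHull_of_exists_fintype ![r, s, t] ![x, y, z] ?_ ?_ ?_ ?_ <;>
      simp [Fin.forall_fin_succ, Fin.sum_univ_three, *]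

variable {p a b c : Plane}

theorem det2_affineCombination {r s t : ℝ} (h : r + s + t = 1) :
    det2 (r • a + s • b + t • c) b c = r * det2 a b c := by
  obtain rfl : r = 1 - s - t := by linarith
  simp only [det2, Prod.fst_add, Prod.snd_add, Prod.smul_fst, Prod.smul_snd, smul_eq_mul]
  ring

-- Cramer's rule: the three quotients are the barycentric coordinates of `p`.
theorem mem_convexHull_triple_iff_det2 (h : det2 a b c ≠ 0) :
    p ∈ convexHull ℝ {a, b, c} ↔
      0 ≤ det2 p b c / det2 a b c ∧ 0 ≤ det2 p c a / det2 a b c ∧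
        0 ≤ det2 p a b / det2 a b c := by
  rw [mem_convexHull_triple]
  constructor
  · rintro ⟨r, s, t, hr, hs, ht, hrst, rfl⟩
    have hbc : det2 (r • a + s • b + t • c) b c = r * det2 a b c := det2_affineCombination hrst
    have hca : det2 (r • a + s • b + t • c) c a = s * det2 a b c := by
      rw [← det2_rotate a b c, ← det2_affineCombination (by linarith : s + t + r = 1)]
      congr 1
      abel
    have hab : det2 (r • a + s • b + t • c) a b = t * det2 a b c := by
      rw [det2_rotate c a b, ← det2_affineCombination (by linarith : t + r + s = 1)]
      congr 1
      abel
    simp only [hbc, hca, hab, mul_div_cancel_right₀ _ h]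
    exact ⟨hr, hs, ht⟩
  · rintro ⟨hr, hs, ht⟩
    refine ⟨_, _, _, hr, hs, ht, ?_, ?_⟩
    · rw [← add_div, ← add_div, div_eq_one_iff_eq h, ← det2_add_det2_add_det2 p a b c]
      ring
    · ext <;> simp only [Prod.fst_add, Prod.snd_add, Prod.smul_fst, Prod.smul_snd, smul_eq_mul] <;>
        field_simp <;> unfold det2 <;> ring

theorem mem_convexHull_triple_iff_leftOf (habc : LeftOf a b c) (hab : det2 p a b ≠ 0)
    (hbc : det2 p b c ≠ 0) (hca : det2 p c a ≠ 0) :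
    p ∈ convexHull ℝ {a, b, c} ↔ LeftOf p a b ∧ LeftOf p b c ∧ LeftOf p c a := by
  have hpos : 0 < det2 a b c := habc
  simp only [mem_convexHull_triple_iff_det2 hpos.ne', le_div_iff₀ hpos, zero_mul, LeftOf,
    hab.symm.le_iff_lt, hbc.symm.le_iff_lt, hca.symm.le_iff_lt]
  tauto

theorem vertex_mem_convexHull_iff_not_leftOf (habc : LeftOf a b c) (hbc : det2 p b c ≠ 0) :
    a ∈ convexHull ℝ {p, b, c} ↔ ¬ LeftOf p a b ∧ ¬ LeftOf p c a := by
  have hpos : 0 < det2 a b c := habc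
  have hsum := det2_add_det2_add_det2 p a b c
  rw [mem_convexHull_triple_iff_det2 hbc, ← det2_rotate a c p, ← det2_rotate c p a,
    det2_swap_right p c a, det2_swap_left p a b, LeftOf, LeftOf, not_lt, not_lt]
  constructor
  · rintro ⟨h, hca, hab⟩
    have hbc_pos : 0 < det2 p b c := by
      by_contra! hbc_nonpos
      exact h.not_gt (div_neg_of_pos_of_neg hpos (hbc_nonpos.lt_of_ne hbc))
    rw [le_div_iff₀ hbc_pos, zero_mul, neg_nonneg] at hca hab
    exact ⟨hab, hca⟩
  · rintro ⟨hab, hca⟩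
    have hbc_pos : 0 < det2 p b c := by linarith
    simp only [le_div_iff₀ hbc_pos, zero_mul, neg_nonneg]
    exact ⟨hpos.le, hca, hab⟩

theorem convexPos_quadruple (hpa : p ≠ a) (hpb : p ≠ b) (hpc : p ≠ c) (hab : a ≠ b) (hac : a ≠ c)
    (hbc : b ≠ c) :
    ConvexPos {p, a, b, c} ↔ p ∉ convexHull ℝ {a, b, c} ∧ a ∉ convexHull ℝ {p, b, c} ∧
      b ∉ convexHull ℝ {p, c, a} ∧ c ∉ convexHull ℝ {p, a, b} := by
  have erase_p : ({p, a, b, c} : Finset Plane).erase p = {a, b, c} := by grind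
  have erase_a : ({p, a, b, c} : Finset Plane).erase a = {p, b, c} := by grind
  have erase_b : ({p, a, b, c} : Finset Plane).erase b = {p, c, a} := by grind
  have erase_c : ({p, a, b, c} : Finset Plane).erase c = {p, a, b} := by grind
  simp only [ConvexPos, mem_insert, mem_singleton, forall_eq_or_imp, forall_eq, erase_p, erase_a,
    erase_b, erase_c, coe_insert, coe_singleton]

end ConvexPosition

section Localization

variable {p q r : Plane} {T : Finset Plane}

open Classical in
theorem lam_eq_card_filter (S : Finset Plane) (p q : Plane) :
    lam S p q = #{r ∈ S | LeftOf p q r} := by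
  unfold lam
  split_ifs with hpq
  · subst hpq
    simp [not_leftOf_self]
  · rfl

theorem lam_insert_left (T : Finset Plane) (p q : Plane) : lam (insert p T) p q = lam T p q := by
  simp only [lam_eq_card_filter, filter_insert, not_leftOf_left, if_false]

theorem lam_insert_right (T : Finset Plane) (p q : Plane) : lam (insert p T) q p = lam T q p := by
  simp only [lam_eq_card_filter, filter_insert, not_leftOf_right, if_false]

theorem lam_insert_of_leftOf (hp : p ∉ T) (h : LeftOf q r p) :
    lam (insert p T) q r = lam T q r + 1 := by
  classical
  rw [lam_eq_card_filter, lam_eq_card_filter, filter_insert, if_pos h,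
    card_insert_of_notMem fun hpT ↦ hp (mem_of_mem_filter p hpT)]

theorem fS_insert_left (T : Finset Plane) (p : Plane) :
    fS (insert p T) {p} (insert p T) = fS T {p} T := by
  simp only [fS, sum_singleton, lam_insert_left]
  exact sum_insert_of_eq_zero_if_notMem fun _ ↦ by simp [lam]

theorem fS_insert_right (T : Finset Plane) (p : Plane) :
    fS (insert p T) (insert p T) {p} = fS T T {p} := by
  simp only [fS, sum_singleton, lam_insert_right]
  exact sum_insert_of_eq_zero_if_notMem fun _ ↦ by simp [lam]

theorem fS_left_eq_sum_powersetCard (T : Finset Plane) (p : Plane) :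
    fS T {p} T = ∑ P ∈ T.powersetCard 3, fS P {p} P := by
  classical
  simp only [fS, sum_singleton, lam_eq_card_filter]
  exact sum_choose_card_filter_eq_sum_powersetCard T (LeftOf p) (not_leftOf_right p) 2

theorem fS_right_eq_sum_powersetCard (T : Finset Plane) (p : Plane) :
    fS T T {p} = ∑ P ∈ T.powersetCard 3, fS P P {p} := by
  classical
  simp only [fS, sum_singleton, lam_eq_card_filter]
  exact sum_choose_card_filter_eq_sum_powersetCard T (LeftOf · p) (not_leftOf_left · p) 2

open Classical in
/-- The number of paths `p → q → r → s` with `q, r, s ∈ T` that turn left at `q` and at `r`. With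
`S = insert p T` and `p ∉ T`, the sum of `1 - lam S q r` in the deletion formula is minus this
number. -/
noncomputable def leftPathCount (T : Finset Plane) (p : Plane) : ℕ :=
  ∑ q ∈ T, ∑ r ∈ T with LeftOf p q r, lam T q r

theorem leftPathCount_eq_sum_powersetCard (T : Finset Plane) (p : Plane) :
    leftPathCount T p = ∑ P ∈ T.powersetCard 3, leftPathCount P p := by
  classical
  have eq_sum (U : Finset Plane) : leftPathCount U p =
      ∑ q ∈ U, ∑ r ∈ U, ∑ s ∈ U, if LeftOf p q r ∧ LeftOf q r s then 1 else 0 := by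
    simp only [leftPathCount, sum_filter, lam_eq_card_filter, card_filter, ite_and]
    refine sum_congr rfl fun q _ ↦ sum_congr rfl fun r _ ↦ ?_
    split_ifs <;> simp
  simp only [eq_sum]
  apply sum_triples_eq_sum_powersetCard <;>
    simp [not_leftOf_left, not_leftOf_right]

open Classical in
theorem sum_one_sub_lam_insert (hp : p ∉ T) :
    ∑ q ∈ T, ∑ r ∈ insert p T with LeftOf p q r, (1 - (lam (insert p T) q r : ℤ)) =
      -leftPathCount T p := by
  rw [leftPathCount, Nat.cast_sum, ← sum_neg_distrib]
  refine sum_congr rfl fun q _ ↦ ?_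
  rw [filter_insert, if_neg (not_leftOf_left p q), Nat.cast_sum, ← sum_neg_distrib]
  refine sum_congr rfl fun r hr ↦ ?_
  have hqrp : LeftOf q r p := (leftOf_rotate p q r).mpr (mem_filter.mp hr).2
  rw [lam_insert_of_leftOf hp hqrp]
  push_cast
  ring

end Localization

section Triangle

variable {p a b c : Plane}

open Classical in
/-- The number of directed edges `ab`, `bc`, `ca` of the triangle `abc` that have `p` strictly on
their left, where `LeftOf p a b` stands for its rotation `LeftOf a b p`. For `abc` counterclockwise
it determines the contribution of `abc` to every term of the deletion formula. -/
noncomputable def leftEdgeCount (p a b c : Plane) : ℕ :=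
  (if LeftOf p a b then 1 else 0) + (if LeftOf p b c then 1 else 0) +
    if LeftOf p c a then 1 else 0

theorem leftEdgeCount_pos (habc : LeftOf a b c) (p : Plane) : 0 < leftEdgeCount p a b c := by
  have hexists : LeftOf p a b ∨ LeftOf p b c ∨ LeftOf p c a := by
    have hpos : 0 < det2 a b c := habc
    have hsum := det2_add_det2_add_det2 p a b c
    unfold LeftOf
    by_contra! h
    linarith
  unfold leftEdgeCount
  split_ifs <;> simp_all

theorem leftEdgeCount_le_three (p a b c : Plane) : leftEdgeCount p a b c ≤ 3 := by
  unfold leftEdgeCount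
  split_ifs <;> simp

theorem convexPos_iff_leftEdgeCount_eq_two (habc : LeftOf a b c) (hab : det2 p a b ≠ 0)
    (hbc : det2 p b c ≠ 0) (hca : det2 p c a ≠ 0) :
    ConvexPos {p, a, b, c} ↔ leftEdgeCount p a b c = 2 := by
  obtain ⟨hne_pa, hne_pb, hne_ab⟩ := ne_of_det2_ne_zero hab
  obtain ⟨-, hne_pc, hne_bc⟩ := ne_of_det2_ne_zero hbc
  obtain ⟨-, -, hne_ca⟩ := ne_of_det2_ne_zero hca
  have hbca : LeftOf b c a := (leftOf_rotate a b c).mpr habc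
  have hcab : LeftOf c a b := (leftOf_rotate b c a).mpr hbca
  rw [convexPos_quadruple hne_pa hne_pb hne_pc hne_ab hne_ca.symm hne_bc,
    mem_convexHull_triple_iff_leftOf habc hab hbc hca,
    vertex_mem_convexHull_iff_not_leftOf habc hbc, vertex_mem_convexHull_iff_not_leftOf hbca hca,
    vertex_mem_convexHull_iff_not_leftOf hcab hab, leftEdgeCount]
  split_ifs <;> simp [*]

theorem two_mul_fS_triangle_left (hab : det2 p a b ≠ 0) (hbc : det2 p b c ≠ 0)
    (hca : det2 p c a ≠ 0) :
    2 * fS {a, b, c} {p} {a, b, c} = leftEdgeCount p a b c * (3 - leftEdgeCount p a b c) := by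
  obtain ⟨-, -, hne_ab⟩ := ne_of_det2_ne_zero hab
  obtain ⟨-, -, hne_bc⟩ := ne_of_det2_ne_zero hbc
  obtain ⟨-, -, hne_ca⟩ := ne_of_det2_ne_zero hca
  have hba : LeftOf p b a ↔ ¬ LeftOf p a b := leftOf_swap_right hab
  have hcb : LeftOf p c b ↔ ¬ LeftOf p b c := leftOf_swap_right hbc
  have hac : LeftOf p a c ↔ ¬ LeftOf p c a := leftOf_swap_right hca
  by_cases LeftOf p a b <;> by_cases LeftOf p b c <;> by_cases LeftOf p c a <;>
    simp [fS, lam_eq_card_filter, filter_insert, filter_singleton, leftEdgeCount,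
      not_leftOf_right, hne_ca.symm, *]

theorem two_mul_fS_triangle_right (hab : det2 p a b ≠ 0) (hbc : det2 p b c ≠ 0)
    (hca : det2 p c a ≠ 0) :
    2 * fS {a, b, c} {a, b, c} {p} = leftEdgeCount p a b c * (3 - leftEdgeCount p a b c) := by
  obtain ⟨-, -, hne_ab⟩ := ne_of_det2_ne_zero hab
  obtain ⟨-, -, hne_bc⟩ := ne_of_det2_ne_zero hbc
  obtain ⟨-, -, hne_ca⟩ := ne_of_det2_ne_zero hca
  have hapb : LeftOf a p b ↔ ¬ LeftOf p a b := leftOf_swap_left hab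
  have hbpc : LeftOf b p c ↔ ¬ LeftOf p b c := leftOf_swap_left hbc
  have hcpa : LeftOf c p a ↔ ¬ LeftOf p c a := leftOf_swap_left hca
  have hbpa : LeftOf b p a ↔ LeftOf p a b := leftOf_rotate b p a |>.symm
  have hcpb : LeftOf c p b ↔ LeftOf p b c := leftOf_rotate c p b |>.symm
  have hapc : LeftOf a p c ↔ LeftOf p c a := leftOf_rotate a p c |>.symm
  by_cases LeftOf p a b <;> by_cases LeftOf p b c <;> by_cases LeftOf p c a <;>
    simp [fS, lam_eq_card_filter, filter_insert, filter_singleton, leftEdgeCount,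
      not_leftOf_left, hne_ca.symm, *]

theorem leftPathCount_triangle (habc : LeftOf a b c) :
    leftPathCount {a, b, c} p = leftEdgeCount p a b c := by
  have hpos : 0 < det2 a b c := habc
  obtain ⟨hne_ab, hne_ac, hne_bc⟩ := ne_of_det2_ne_zero hpos.ne'
  have hbca : LeftOf b c a := (leftOf_rotate a b c).mpr habc
  have hcab : LeftOf c a b := (leftOf_rotate b c a).mpr hbca
  have hbac : ¬ LeftOf b a c := by rwa [leftOf_swap_left hpos.ne', not_not]
  have hacb : ¬ LeftOf a c b := by rwa [← leftOf_rotate a c b, ← leftOf_rotate c b a]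
  have hcba : ¬ LeftOf c b a := by rwa [← leftOf_rotate c b a]
  have lam_eq_one : lam {a, b, c} a b = 1 ∧ lam {a, b, c} b c = 1 ∧ lam {a, b, c} c a = 1 := by
    simp [lam_eq_card_filter, filter_insert, filter_singleton, not_leftOf_left, not_leftOf_right, *]
  have lam_eq_zero : lam {a, b, c} b a = 0 ∧ lam {a, b, c} c b = 0 ∧ lam {a, b, c} a c = 0 := by
    simp [lam_eq_card_filter, filter_insert, filter_singleton, not_leftOf_left, not_leftOf_right, *]
  simp [leftPathCount, sum_filter, leftEdgeCount, not_leftOf_right, add_assoc, *]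

open Classical in
theorem fS_add_fS_add_leftPathCount_triangle (habc : LeftOf a b c) (hab : det2 p a b ≠ 0)
    (hbc : det2 p b c ≠ 0) (hca : det2 p c a ≠ 0) :
    fS {a, b, c} {p} {a, b, c} + fS {a, b, c} {a, b, c} {p} + leftPathCount {a, b, c} p =
      (if ConvexPos {p, a, b, c} then 1 else 0) + 3 := by
  have hleft := two_mul_fS_triangle_left hab hbc hca
  have hright := two_mul_fS_triangle_right hab hbc hca
  have hpos : 0 < leftEdgeCount p a b c := leftEdgeCount_pos habc p
  have hle : leftEdgeCount p a b c ≤ 3 := leftEdgeCount_le_three p a b c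
  rw [leftPathCount_triangle habc, convexPos_iff_leftEdgeCount_eq_two habc hab hbc hca]
  generalize leftEdgeCount p a b c = k at *
  interval_cases k <;> split_ifs <;> omega

end Triangle

section DoubleCount

variable {p : Plane} {P T : Finset Plane}

theorem GenPos.exists_leftOf_eq_triple (hgp : GenPos P) (hP : #P = 3) :
    ∃ a b c, LeftOf a b c ∧ P = {a, b, c} := by
  obtain ⟨a, b, c, hab, hac, hbc, rfl⟩ := card_eq_three.mp hP
  have habc : det2 a b c ≠ 0 := hgp.det2_ne_zero (by simp) (by simp) (by simp) hab hac hbc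
  by_cases h : LeftOf a b c
  · exact ⟨a, b, c, h, rfl⟩
  · exact ⟨a, c, b, (leftOf_swap_right habc).mpr h, by rw [pair_comm]⟩

open Classical in
theorem fS_add_fS_add_leftPathCount_of_card_eq_three (hP : #P = 3) (hp : p ∉ P)
    (hgp : GenPos (insert p P)) :
    fS P {p} P + fS P P {p} + leftPathCount P p =
      (if ConvexPos (insert p P) then 1 else 0) + 3 := by
  obtain ⟨a, b, c, habc, rfl⟩ := (hgp.mono (subset_insert p P)).exists_leftOf_eq_triple hP
  obtain ⟨hab, hac, hbc⟩ := ne_of_det2_ne_zero (ne_of_gt habc)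
  obtain ⟨hpa, hpb, hpc⟩ : p ≠ a ∧ p ≠ b ∧ p ≠ c := by simpa using hp
  apply fS_add_fS_add_leftPathCount_triangle habc <;> apply hgp.det2_ne_zero <;>
    simp [hpa, hpb, hpc, hab, hbc, hac.symm]

open Classical in
theorem fS_add_fS_add_leftPathCount (hp : p ∉ T) (hgp : GenPos (insert p T)) :
    fS T {p} T + fS T T {p} + leftPathCount T p =
      #{P ∈ T.powersetCard 3 | ConvexPos (insert p P)} + 3 * (#T).choose 3 := by
  have hlocal (P : Finset Plane) (hP : P ∈ T.powersetCard 3) :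
      fS P {p} P + fS P P {p} + leftPathCount P p =
        (if ConvexPos (insert p P) then 1 else 0) + 3 := by
    obtain ⟨hPT, hcard⟩ := mem_powersetCard.mp hP
    exact fS_add_fS_add_leftPathCount_of_card_eq_three hcard (notMem_mono hPT hp)
      (hgp.mono (insert_subset_insert p hPT))
  rw [fS_left_eq_sum_powersetCard, fS_right_eq_sum_powersetCard, leftPathCount_eq_sum_powersetCard,
    ← sum_add_distrib, ← sum_add_distrib, sum_congr rfl hlocal, sum_add_distrib, ← card_filter,
    sum_const, card_powersetCard, smul_eq_mul, mul_comm]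

theorem squareCount_insert_add (hp : p ∉ T) (hgp : GenPos (insert p T)) :
    squareCount (insert p T) + 3 * (#T).choose 3 =
      squareCount T + fS (insert p T) {p} (insert p T) + fS (insert p T) (insert p T) {p} +
        leftPathCount T p := by
  classical
  have hinsert := card_filter_powersetCard_succ_insert hp 3 ConvexPos
  have hlocal := fS_add_fS_add_leftPathCount hp hgp
  rw [squareCount, squareCount, fS_insert_left, fS_insert_right, hinsert]
  linarith

end DoubleCount

theorem sub_mul_sub_mul_sub_ediv_two (m : ℕ) :
    (m : ℤ) * (m - 1) * (m - 2) / 2 = 3 * (m.choose 3 : ℤ) := by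
  have h : (m.descFactorial 3 : ℤ) = 6 * m.choose 3 :=
    mod_cast Nat.descFactorial_eq_factorial_mul_choose m 3
  have hdesc : (m.descFactorial 3 : ℤ) = m * (m - 1) * (m - 2) := by
    rw [← descPochhammer_eval_eq_descFactorial, descPochhammer_eval_eq_prod_range]
    simp [prod_range_succ]
  omega

open Classical in
theorem stmt15 (n : ℕ) (S : Finset Plane) (hcard : S.card = n) (hgp : GenPos S)
    (p : Plane) (hp : p ∈ S) :
    (squareCount (S.erase p) : ℤ) =
      (squareCount S : ℤ) - (fS S {p} S : ℤ) - (fS S S {p} : ℤ) +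
        (∑ q ∈ S.erase p, ∑ r ∈ S.filter (fun r => LeftOf p q r),
          (1 - (lam S q r : ℤ))) +
        ((n : ℤ) - 1) * ((n : ℤ) - 2) * ((n : ℤ) - 3) / 2 := by
  obtain ⟨T, hpT, rfl⟩ : ∃ T, p ∉ T ∧ insert p T = S := ⟨S.erase p, by simp, insert_erase hp⟩
  have hn : (n : ℤ) = #T + 1 := by
    rw [← hcard, card_insert_of_notMem hpT, Nat.cast_succ]
  have hpoly : ((n : ℤ) - 1) * (n - 2) * (n - 3) / 2 = 3 * ((#T).choose 3 : ℤ) := by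
    rw [hn, ← sub_mul_sub_mul_sub_ediv_two]
    ring_nf
  have hcount := squareCount_insert_add hpT hgp
  rw [erase_insert hpT, sum_one_sub_lam_insert hpT, hpoly]
  zify at hcount
  linarith
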